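/- Let p be a prime, k ≥ 1 an integer, K a field of characteristic p, A = K[x]/(x^{kp}), and B = A ⊗_K A. Then for every m ≥ 0, Ext^m_B(A,A) is a K-vector space of dimension kp; in particular Ext^m_B(A,A) ≅ A as K-vector spaces for all m. -/

import Mathlib

/-! Let `S = R[X]/(f)` with `f` monic, and let `a ∈ S` be the class of `X`. Then
`S ⊗ S = S[X]/(f)`, and over `S` the polynomial `f` factors as `(X - a) g` with both factors monic.
The images `u` of `X - a` and `v` of `g` are therefore an exact pair of zero divisors, and `u`
generates the kernel of the multiplication map `S ⊗ S → S`, so alternating multiplication by `u` and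
`v` gives a 2-periodic free resolution of `S`. Applying `Hom(-, S)` turns these two maps into
multiplication by `0` and by `g(a) = f'(a)`. If `f' = 0`, all differentials vanish and every `Ext`
group is `S`; in characteristic `p` this is the case for `f = X ^ (k * p)`. -/

open Polynomial TensorProduct CategoryTheory

noncomputable section

/-- `A = K[x]/(x^N)`, the truncated polynomial ring over the field `K`. -/
abbrev A (K : Type) [Field K] (N : ℕ) : Type := AdjoinRoot ((X : K[X]) ^ N)

/-- `B = A ⊗_K A`. -/
abbrev B (K : Type) [Field K] (N : ℕ) : Type := A K N ⊗[K] A K N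

/-- `A` is a `B`-module via the multiplication map `μ(a ⊗ b) = ab`. -/
instance (K : Type) [Field K] (N : ℕ) : Algebra (B K N) (A K N) :=
  (Algebra.TensorProduct.lmul' K (S := A K N)).toRingHom.toAlgebra

/-- `A` as an object of the category of `B`-modules. -/
def M (K : Type) [Field K] (N : ℕ) : ModuleCat.{0} (B K N) := ModuleCat.of (B K N) (A K N)

/-- `Ext^m_B(A, A)` as a `K`-vector space, defined via the derived functor `Ext` of the
`K`-linear abelian category of `B`-modules. -/
def ExtAA (K : Type) [Field K] (N m : ℕ) : ModuleCat K :=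
  ((Ext K (ModuleCat.{0} (B K N)) m).obj (Opposite.op (M K N))).obj (M K N)

universe u v w

section ExactPair

variable {R : Type u} [CommRing R] {p q : R}

/-- An exact pair of zero divisors: each of `p` and `q` generates the annihilator of the other.
These are the pairs for which the complex `⋯ → R → R → R`, with differentials alternating between
multiplication by `p` and by `q`, is exact. -/
structure IsExactPair (p q : R) : Prop where
  left_mul_eq_zero_iff : ∀ r, p * r = 0 ↔ q ∣ r
  right_mul_eq_zero_iff : ∀ r, q * r = 0 ↔ p ∣ r

lemma IsExactPair.mul_eq_zero (h : IsExactPair p q) : p * q = 0 :=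
  (h.left_mul_eq_zero_iff q).2 dvd_rfl

lemma IsExactPair.symm (h : IsExactPair p q) : IsExactPair q p :=
  ⟨h.right_mul_eq_zero_iff, h.left_mul_eq_zero_iff⟩

lemma map_mul_map_eq_zero_iff_of_isLeftRegular {T : Type v} [CommRing T] {φ : R →+* T}
    (hφ : Function.Surjective φ) (hker : ∀ r, φ r = 0 ↔ p * q ∣ r) (hp : IsLeftRegular p) (t : T) :
    φ p * t = 0 ↔ φ q ∣ t := by
  obtain ⟨r, rfl⟩ := hφ t
  constructor
  · intro h
    rw [← map_mul, hker, hp.dvd_cancel_left] at h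
    exact map_dvd φ h
  · rintro ⟨t', ht'⟩
    rw [ht', ← mul_assoc, ← map_mul, (hker _).2 dvd_rfl, zero_mul]

lemma IsExactPair.of_surjective {T : Type v} [CommRing T] {φ : R →+* T}
    (hφ : Function.Surjective φ) (hker : ∀ r, φ r = 0 ↔ p * q ∣ r)
    (hp : IsLeftRegular p) (hq : IsLeftRegular q) : IsExactPair (φ p) (φ q) where
  left_mul_eq_zero_iff := map_mul_map_eq_zero_iff_of_isLeftRegular hφ hker hp
  right_mul_eq_zero_iff :=
    map_mul_map_eq_zero_iff_of_isLeftRegular hφ (by simpa only [mul_comm q p] using hker) hq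

end ExactPair

section AlternatingConst

open HomologicalComplex

variable {C : Type u} [Category.{v} C] [Abelian C] {Y : C} {φ ψ : Y ⟶ Y}

lemma exactAt_alternatingConst {hOdd : φ ≫ ψ = 0} {hEven : ψ ≫ φ = 0}
    (exOdd : (ShortComplex.mk φ ψ hOdd).Exact) (exEven : (ShortComplex.mk ψ φ hEven).Exact)
    {c : ComplexShape ℕ} [DecidableRel c.Rel] (hc : ∀ i j, c.Rel i j → Odd (i + j))
    {i j k : ℕ} (hij : c.Rel i j) (hjk : c.Rel j k) :
    (alternatingConst Y hOdd hEven hc).ExactAt j := by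
  rw [exactAt_iff' _ i j k (c.prev_eq' hij) (c.next_eq' hjk)]
  rcases Nat.even_or_odd j with hj | hj
  · exact (ShortComplex.exact_iff_of_iso
      (alternatingConstScIsoEven Y hOdd hEven hc hij hjk hj)).2 exEven
  · exact (ShortComplex.exact_iff_of_iso
      (alternatingConstScIsoOdd Y hOdd hEven hc hij hjk hj)).2 exOdd

end AlternatingConst

lemma smul_id_comp_eq_zero {R : Type u} [CommRing R] {Y N : ModuleCat.{v} R} {r : R}
    (hr : ∀ x : N, r • x = 0) (g : Y ⟶ N) : (r • 𝟙 Y) ≫ g = 0 := by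
  ext x
  simp [hr]

namespace IsExactPair

variable {R : Type u} [CommRing R] {p q : R}

lemma smul_id_comp_smul_id (h : IsExactPair p q) :
    (q • 𝟙 (ModuleCat.of R R)) ≫ (p • 𝟙 (ModuleCat.of R R)) = 0 := by
  simp [smul_smul, h.mul_eq_zero]

lemma exact_smul_id (h : IsExactPair p q) :
    (ShortComplex.mk _ _ h.smul_id_comp_smul_id).Exact := by
  rw [ShortComplex.moduleCat_exact_iff]
  intro r hr
  obtain ⟨s, hs⟩ := (h.left_mul_eq_zero_iff r).1 hr
  exact ⟨s, hs.symm⟩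

/-- The 2-periodic complex `⋯ → R → R → R`, ending in degree `0`, whose differentials are
multiplication by `p` out of odd degrees and by `q` out of even ones. -/
def periodicComplex (h : IsExactPair p q) : ChainComplex (ModuleCat.{u} R) ℕ :=
  HomologicalComplex.alternatingConst (ModuleCat.of R R) h.smul_id_comp_smul_id
    h.symm.smul_id_comp_smul_id fun _ _ => ComplexShape.down_nat_odd_add

lemma periodicComplex_d (h : IsExactPair p q) (i j : ℕ) :
    h.periodicComplex.d i j = if j + 1 = i then if Even i then q • 𝟙 _ else p • 𝟙 _ else 0 := rfl

variable {N : ModuleCat.{u} R} {π : R →ₗ[R] N}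

/-- The augmentation of the periodic complex induced by a map `π : R → N` that kills `p`. -/
def augmentation (h : IsExactPair p q) (hπp : π p = 0) :
    h.periodicComplex ⟶ (ChainComplex.single₀ (ModuleCat.{u} R)).obj N :=
  (h.periodicComplex.toSingle₀Equiv _).symm ⟨ModuleCat.ofHom π, by
    rw [h.periodicComplex_d, if_pos rfl, if_neg (by decide)]
    ext
    change π (p * 1) = 0
    rw [mul_one, hπp]⟩

lemma quasiIso_augmentation (h : IsExactPair p q) (hπ : Function.Surjective π)
    (hker : ∀ r, π r = 0 ↔ p ∣ r) : QuasiIso (h.augmentation ((hker p).2 dvd_rfl)) where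
  quasiIsoAt n := by
    cases n with
    | zero =>
      rw [ChainComplex.quasiIsoAt₀_iff, ShortComplex.quasiIso_iff_of_zeros' _ rfl rfl rfl]
      constructor
      · rw [ShortComplex.moduleCat_exact_iff]
        intro r hr
        obtain ⟨s, hs⟩ := (hker r).1 hr
        exact ⟨s, hs.symm⟩
      · rw [ModuleCat.epi_iff_surjective]
        exact hπ
    | succ n =>
      rw [quasiIsoAt_iff_exactAt' (hL := ChainComplex.exactAt_succ_single_obj ..)]
      exact exactAt_alternatingConst h.exact_smul_id h.symm.exact_smul_id _
        (ComplexShape.down_mk (n + 2) (n + 1) rfl) (ComplexShape.down_mk (n + 1) n rfl)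

/-- The 2-periodic free resolution of the cyclic module `N ≅ R / (p)`, presented by a surjection
`π : R → N` with kernel `(p)`. -/
def resolution (h : IsExactPair p q) (hπ : Function.Surjective π)
    (hker : ∀ r, π r = 0 ↔ p ∣ r) : ProjectiveResolution N where
  complex := h.periodicComplex
  projective _ := inferInstanceAs (Projective (ModuleCat.of R R))
  π := h.augmentation ((hker p).2 dvd_rfl)
  quasiIso := h.quasiIso_augmentation hπ hker

open scoped ModuleCat.Algebra

variable {N' : ModuleCat.{u} R}

lemma d_linearYonedaObj_resolution (k : Type w) [CommRing k] [Algebra k R]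
    (h : IsExactPair p q) (hπ : Function.Surjective π) (hker : ∀ r, π r = 0 ↔ p ∣ r)
    (hp : ∀ x : N', p • x = 0) (hq : ∀ x : N', q • x = 0) (i j : ℕ) :
    ((h.resolution hπ hker).complex.linearYonedaObj k N').d i j = 0 := by
  ext (g : ModuleCat.of R R ⟶ N')
  change h.periodicComplex.d j i ≫ g = 0
  rw [h.periodicComplex_d]
  split_ifs
  · exact smul_id_comp_eq_zero hq g
  · exact smul_id_comp_eq_zero hp g
  · exact Limits.zero_comp

/-- If `(p, q)` is an exact pair and both `p` and `q` annihilate `N'`, then the groups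
`Ext^m_R(R / (p), N')` are the terms `Hom_R(R, N') ≅ N'` of the complex that computes them. -/
def extEquiv (k : Type w) [CommRing k] [Algebra k R]
    (h : IsExactPair p q) (hπ : Function.Surjective π) (hker : ∀ r, π r = 0 ↔ p ∣ r)
    (hp : ∀ x : N', p • x = 0) (hq : ∀ x : N', q • x = 0) (m : ℕ) :
    ((Ext k (ModuleCat.{u} R) m).obj (Opposite.op N)).obj N' ≃ₗ[k] N' :=
  let D := (h.resolution hπ hker).complex.linearYonedaObj k N'
  have hd := h.d_linearYonedaObj_resolution k hπ hker hp hq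
  let e : D.homology m ≅ D.X m :=
    (ShortComplex.HomologyData.ofZeros (D.sc m) (hd _ _) (hd _ _)).left.homologyIso
  ((h.resolution hπ hker).isoExt m N' ≪≫ e).toLinearEquiv ≪≫ₗ
    ModuleCat.homLinearEquiv (S := k) ≪≫ₗ LinearMap.ringLmapEquivSelf R k N'

end IsExactPair

section Tensor

open AdjoinRoot

variable {R : Type u} [CommRing R] {T : Type v} [CommRing T] [Algebra R T] {f : R[X]}

lemma aeval_one_tmul_root (P : R[X]) :
    aeval (1 ⊗ₜ root f : T ⊗[R] AdjoinRoot f) P = 1 ⊗ₜ mk f P := by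
  rw [← aeval_eq]
  exact aeval_algHom_apply (Algebra.TensorProduct.includeRight (R := R) (A := T)) (root f) P

lemma aeval_one_tmul_root_surjective :
    Function.Surjective (aeval (1 ⊗ₜ root f) : T[X] →ₐ[T] T ⊗[R] AdjoinRoot f) := by
  intro z
  induction z using TensorProduct.induction_on with
  | zero => exact ⟨0, map_zero _⟩
  | add y z hy hz =>
    obtain ⟨P, rfl⟩ := hy
    obtain ⟨Q, rfl⟩ := hz
    exact ⟨P + Q, map_add _ P Q⟩
  | tmul t s =>
    obtain ⟨P, rfl⟩ := mk_surjective s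
    refine ⟨C t * P.map (algebraMap R T), ?_⟩
    rw [map_mul, aeval_C, aeval_map_algebraMap, aeval_one_tmul_root,
      Algebra.TensorProduct.algebraMap_apply, Algebra.TensorProduct.tmul_mul_tmul, mul_one, one_mul]
    rfl

lemma aeval_one_tmul_root_eq_zero_iff_dvd (P : T[X]) :
    aeval (1 ⊗ₜ root f : T ⊗[R] AdjoinRoot f) P = 0 ↔ f.map (algebraMap R T) ∣ P := by
  constructor
  · intro h
    let ψ : T ⊗[R] AdjoinRoot f →ₐ[T] AdjoinRoot (f.map (algebraMap R T)) :=
      Algebra.TensorProduct.lift (Algebra.ofId T _)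
        (mapAlgHom (Algebra.ofId R T) f (f.map (algebraMap R T)) dvd_rfl) fun _ _ => .all ..
    have hψ : ψ (1 ⊗ₜ root f) = root _ := by
      rw [Algebra.TensorProduct.lift_tmul, map_one, one_mul]
      exact map_root _ f _ dvd_rfl
    rw [← mk_eq_zero, ← aeval_eq, ← hψ, aeval_algHom_apply, h, map_zero]
  · rintro ⟨Q, rfl⟩
    rw [map_mul, aeval_map_algebraMap, aeval_one_tmul_root, mk_self, TensorProduct.tmul_zero,
      zero_mul]

end Tensor

section Hochschild

variable (R : Type u) [CommRing R] (S : Type v) [CommRing S] [Algebra R S]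

/-- `S` as a bimodule over itself, that is, as a module over the enveloping algebra `S ⊗[R] S`,
which acts through the multiplication map `S ⊗[R] S → S`. -/
def diagonalBimodule : ModuleCat.{v} (S ⊗[R] S) :=
  (ModuleCat.restrictScalars (Algebra.TensorProduct.lmul' R (S := S)).toRingHom).obj
    (ModuleCat.of S S)

/-- The multiplication map of `S`, regarded as a bimodule map onto the diagonal bimodule. -/
def mulToDiagonal : S ⊗[R] S →ₗ[S ⊗[R] S] diagonalBimodule R S where
  toFun := Algebra.TensorProduct.lmul' R (S := S)
  map_add' := map_add (Algebra.TensorProduct.lmul' R (S := S))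
  map_smul' := map_mul (Algebra.TensorProduct.lmul' R (S := S))

lemma mulToDiagonal_surjective : Function.Surjective (mulToDiagonal R S) := by
  intro (s : S)
  exact ⟨s ⊗ₜ 1, (Algebra.TensorProduct.lmul'_apply_tmul (R := R) s 1).trans (mul_one s)⟩

variable {R S} in
lemma smul_diagonalBimodule_eq_zero {z : S ⊗[R] S}
    (hz : Algebra.TensorProduct.lmul' R (S := S) z = 0) (x : diagonalBimodule R S) :
    z • x = 0 := by
  change Algebra.TensorProduct.lmul' R (S := S) z * (show S from x) = 0
  rw [hz, zero_mul]

variable {R S} in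
lemma lmul'_aeval_one_tmul (s : S) (P : S[X]) :
    Algebra.TensorProduct.lmul' R (aeval (1 ⊗ₜ[R] s) P) = P.eval s := by
  change Algebra.TensorProduct.lmul'' R (aeval (1 ⊗ₜ[R] s) P) = P.eval s
  rw [← aeval_algHom_apply, ← coe_aeval_eq_eval]
  congr
  exact (Algebra.TensorProduct.lmul'_apply_tmul 1 s).trans (one_mul s)

open scoped ModuleCat.Algebra

/-- The `R`-module structure that the diagonal bimodule inherits from `R → S ⊗[R] S` is the given
one on `S`. -/
def diagonalBimoduleEquiv : diagonalBimodule R S ≃ₗ[R] S where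
  __ := AddEquiv.refl S
  map_smul' r s := by
    change Algebra.TensorProduct.lmul' R (S := S) (algebraMap R (S ⊗[R] S) r) * (show S from s) =
      r • (show S from s)
    rw [AlgHom.commutes, Algebra.smul_def]

/-- The Hochschild cohomology of `S` over `R` with coefficients in `S`, encoded as `Ext` over the
enveloping algebra `S ⊗[R] S`. It agrees with the cohomology of the bar complex when `S` is
projective over `R`. -/
def hochschildCohomology (m : ℕ) : ModuleCat.{v} R :=
  ((Ext R (ModuleCat.{v} (S ⊗[R] S)) m).obj (Opposite.op (diagonalBimodule R S))).obj
    (diagonalBimodule R S)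

end Hochschild

section AdjoinRoot

open AdjoinRoot

lemma eval_divByMonic_X_sub_C_self {R : Type u} [CommRing R] (F : R[X]) (a : R) :
    (F /ₘ (X - C a)).eval a = F.derivative.eval a := by
  simp [← divByMonic_add_X_sub_C_mul_derivative_divByMonic_eq_derivative F a]

variable {R : Type u} [CommRing R] {f : R[X]}

lemma isExactPair_aeval_one_tmul_root {T : Type v} [CommRing T] [Algebra R T] {P Q : T[X]}
    (hPQ : P * Q = f.map (algebraMap R T)) (hP : P.Monic) (hQ : Q.Monic) :
    IsExactPair (aeval (1 ⊗ₜ root f : T ⊗[R] AdjoinRoot f) P)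
      (aeval (1 ⊗ₜ root f : T ⊗[R] AdjoinRoot f) Q) :=
  IsExactPair.of_surjective (φ := (aeval (1 ⊗ₜ root f : T ⊗[R] AdjoinRoot f)).toRingHom)
    aeval_one_tmul_root_surjective
    (fun P' => by rw [hPQ]; exact aeval_one_tmul_root_eq_zero_iff_dvd P')
    hP.isRegular.left hQ.isRegular.left

lemma lmul'_eq_zero_iff_dvd (z : AdjoinRoot f ⊗[R] AdjoinRoot f) :
    Algebra.TensorProduct.lmul' R z = 0 ↔
      aeval (1 ⊗ₜ root f : AdjoinRoot f ⊗[R] AdjoinRoot f) (X - C (root f)) ∣ z := by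
  constructor
  · obtain ⟨P, rfl⟩ := aeval_one_tmul_root_surjective z
    rw [lmul'_aeval_one_tmul]
    intro hP
    exact map_dvd _ (dvd_iff_isRoot.2 hP)
  · rintro ⟨w, rfl⟩
    rw [map_mul, lmul'_aeval_one_tmul, eval_sub, eval_X, eval_C, sub_self, zero_mul]

/-- The Hochschild cohomology of `R[X] / (f)` in any degree, for `f` monic with zero derivative. -/
def hochschildCohomologyEquiv (hf : f.Monic) (hf' : derivative f = 0) (m : ℕ) :
    hochschildCohomology R (AdjoinRoot f) m ≃ₗ[R] AdjoinRoot f :=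
  let F := f.map (algebraMap R (AdjoinRoot f))
  have hroot : F.IsRoot (root f) := isRoot_root f
  have hF : (X - C (root f)) * (F /ₘ (X - C (root f))) = F :=
    mul_divByMonic_eq_iff_isRoot.2 hroot
  have hmonic : (F /ₘ (X - C (root f))).Monic :=
    (monic_X_sub_C _).of_mul_monic_left (by rw [hF]; exact hf.map _)
  have heval : (F /ₘ (X - C (root f))).eval (root f) = 0 := by
    rw [eval_divByMonic_X_sub_C_self, derivative_map, hf', Polynomial.map_zero, eval_zero]
  IsExactPair.extEquiv R (isExactPair_aeval_one_tmul_root hF (monic_X_sub_C _) hmonic)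
      (mulToDiagonal_surjective R _) lmul'_eq_zero_iff_dvd
      (smul_diagonalBimodule_eq_zero ((lmul'_eq_zero_iff_dvd _).2 dvd_rfl))
      (smul_diagonalBimodule_eq_zero ((lmul'_aeval_one_tmul _ _).trans heval)) m ≪≫ₗ
    diagonalBimoduleEquiv R (AdjoinRoot f)

theorem stmt11_general [Nontrivial R] (hf : f.Monic) (hf' : derivative f = 0) (m : ℕ) :
    Module.finrank R (hochschildCohomology R (AdjoinRoot f) m) = f.natDegree ∧
    Nonempty (hochschildCohomology R (AdjoinRoot f) m ≃ₗ[R] AdjoinRoot f) := by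
  refine ⟨?_, ⟨hochschildCohomologyEquiv hf hf' m⟩⟩
  rw [(hochschildCohomologyEquiv hf hf' m).finrank_eq, (powerBasis' hf).finrank, powerBasis'_dim]

end AdjoinRoot

/-- for a field `K` of prime characteristic `p` and `A = K[x]/(x^{kp})`
with `k ≥ 1`, every `Ext^m_B(A,A)` is a `K`-vector space of dimension `kp`; in
particular `Ext^m_B(A,A) ≅ A` as `K`-vector spaces for all `m`. -/
theorem stmt11 (K : Type) [Field K] (p : ℕ) (hp : p.Prime) [CharP K p]
    (k : ℕ) (hk : 1 ≤ k) (m : ℕ) :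
    Module.finrank K (ExtAA K (k * p) m) = k * p ∧
    Nonempty ((ExtAA K (k * p) m) ≃ₗ[K] A K (k * p)) := by
  simpa only [natDegree_X_pow] using!
    stmt11_general (monic_X_pow (R := K) (k * p)) (by simp [derivative_X_pow]) m

end
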